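/- arXiv:2405.00904 — 3 statements merged into one kernel-verified Lean document; each statement's English description precedes it below -/
import Mathlib

section
/- The indicator function u₀(x,y) = 1 if x ≤ −0.4y² + 0.4y + 0.375 and u₀(x,y) = 0 otherwise is a weak solution of ∇·(βu₀) = 0 on the open square (0,1)² with velocity β(x,y) = (0.8y − 0.4, −1): for every smooth function φ : ℝ² → ℝ with compact support contained in (0,1)², ∫_{(0,1)²} u₀(x,y)·((0.8y − 0.4)·∂φ/∂x(x,y) − ∂φ/∂y(x,y)) dx dy = 0. -/
open MeasureTheory

/-- The product of a bounded measurable function and a continuous compactly supported function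
is integrable. -/
lemma integrable_bounded_mul_of_hasCompactSupport {u k : ℝ × ℝ → ℝ} {C : ℝ}
    (hu : Measurable u) (hC : ∀ p, ‖u p‖ ≤ C) (hk : Continuous k) (hkc : HasCompactSupport k) :
    Integrable (fun p => u p * k p) :=
  (hk.integrable_of_hasCompactSupport hkc).bdd_mul hu.aestronglyMeasurable
    (Filter.Eventually.of_forall hC)

/-- The homeomorphism of the plane sending `(s, y)` to `(s + g y, y)`. -/
def shearHomeomorph (g : ℝ → ℝ) (hg : Continuous g) : ℝ × ℝ ≃ₜ ℝ × ℝ where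
  toFun p := (p.1 + g p.2, p.2)
  invFun p := (p.1 - g p.2, p.2)
  left_inv p := by simp
  right_inv p := by simp
  continuous_toFun := by fun_prop
  continuous_invFun := by fun_prop

/-- A bounded function that is constant along the translates of the curve `x = g y` is a weak
solution of the advection equation with velocity tangent to these curves. -/
theorem integral_shear_invariant_mul_tangential_fderiv_eq_zero {φ : ℝ × ℝ → ℝ} {g g' h : ℝ → ℝ}
    {C : ℝ} (hφ : ContDiff ℝ 1 φ) (hcpt : HasCompactSupport φ)
    (hg : ∀ y, HasDerivAt g (g' y) y) (hg' : Continuous g')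
    (hh : Measurable h) (hC : ∀ s, ‖h s‖ ≤ C) :
    ∫ p : ℝ × ℝ, h (p.1 - g p.2) * fderiv ℝ φ p (g' p.2, 1) = 0 := by
  have hgc : Continuous g := continuous_iff_continuousAt.2 fun y => (hg y).continuousAt
  have hfd : Continuous (fderiv ℝ φ) := hφ.continuous_fderiv one_ne_zero
  have hk : Continuous fun p : ℝ × ℝ => fderiv ℝ φ p (g' p.2, 1) := by fun_prop
  have hkc : HasCompactSupport fun p : ℝ × ℝ => fderiv ℝ φ p (g' p.2, 1) :=
    (hcpt.fderiv (𝕜 := ℝ)).mono' fun p hp => subset_tsupport _ fun h0 => hp (by simp [h0])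
  let T := shearHomeomorph g hgc
  have hkT : HasCompactSupport fun p : ℝ × ℝ => fderiv ℝ φ (T p) (g' p.2, 1) :=
    hkc.comp_homeomorph T
  have hF := integrable_bounded_mul_of_hasCompactSupport
    (u := fun p => h (p.1 - g p.2)) (by fun_prop) (fun p => hC _) hk hkc
  have hG := integrable_bounded_mul_of_hasCompactSupport
    (u := fun p => h p.1) (by fun_prop) (fun p => hC _) (hk.comp T.continuous) hkT
  have hline : ∀ s y, HasDerivAt (fun y => φ (s + g y, y))
      (fderiv ℝ φ (s + g y, y) (g' y, 1)) y := fun s y =>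
    ((hφ.differentiable one_ne_zero _).hasFDerivAt).comp_hasDerivAt y
      (((hg y).const_add s).prodMk (hasDerivAt_id y))
  have hemb : ∀ s : ℝ, Topology.IsClosedEmbedding fun y : ℝ => (s, y) := fun s =>
    Topology.IsClosedEmbedding.of_continuous_injective_isClosedMap (by fun_prop)
      (Prod.mk_right_injective s) (isClosedMap_prodMk_left s)
  have hzero : ∀ s, ∫ y, fderiv ℝ φ (s + g y, y) (g' y, 1) = 0 := fun s =>
    integral_eq_zero_of_hasDerivAt_of_integrable (hline s)
      (((hk.comp T.continuous).comp (hemb s).continuous).integrable_of_hasCompactSupport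
        (hkT.comp_isClosedEmbedding (hemb s)))
      (((hφ.continuous.comp T.continuous).comp (hemb s).continuous).integrable_of_hasCompactSupport
        ((hcpt.comp_homeomorph T).comp_isClosedEmbedding (hemb s)))
  calc ∫ p : ℝ × ℝ, h (p.1 - g p.2) * fderiv ℝ φ p (g' p.2, 1)
      = ∫ y, ∫ x, h (x - g y) * fderiv ℝ φ (x, y) (g' y, 1) := integral_prod_symm _ hF
    _ = ∫ y, ∫ s, h s * fderiv ℝ φ (s + g y, y) (g' y, 1) := by
        congr 1 with y
        rw [← integral_add_right_eq_self _ (g y)]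
        simp
    _ = ∫ s, ∫ y, h s * fderiv ℝ φ (s + g y, y) (g' y, 1) := (integral_integral_swap hG).symm
    _ = 0 := by simp [integral_const_mul, hzero]

/-- The indicator function `u₀(x,y) = 1` if `x ≤ -0.4 y² + 0.4 y + 0.375`, `0` otherwise,
is a weak solution of `∇·(β u₀) = 0` on the open square `(0,1)²` with the divergence-free
velocity `β(x,y) = (0.8 y - 0.4, -1)`: for every smooth `φ : ℝ² → ℝ` with compact support
contained in `(0,1)²`,
`∫_{(0,1)²} u₀ · ((0.8 y - 0.4) ∂φ/∂x - ∂φ/∂y) dx dy = 0`. -/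
theorem indicator_weak_solution_vector_advection
    (φ : ℝ × ℝ → ℝ) (hφ : ContDiff ℝ (⊤ : ℕ∞) φ) (hcpt : HasCompactSupport φ)
    (hsupp : tsupport φ ⊆ Set.Ioo (0:ℝ) 1 ×ˢ Set.Ioo (0:ℝ) 1) :
    ∫ p in Set.Ioo (0:ℝ) 1 ×ˢ Set.Ioo (0:ℝ) 1,
      (if p.1 ≤ -0.4 * p.2 ^ 2 + 0.4 * p.2 + 0.375 then (1:ℝ) else 0) *
        ((0.8 * p.2 - 0.4) * fderiv ℝ φ p (1, 0) - fderiv ℝ φ p (0, 1)) = 0 := by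
  have hg : ∀ y : ℝ, HasDerivAt (fun y : ℝ => -0.4 * y ^ 2 + 0.4 * y + 0.375)
      (-0.8 * y + 0.4) y := fun y =>
    (((((hasDerivAt_id y).pow 2).const_mul (-0.4)).add
      ((hasDerivAt_id y).const_mul 0.4)).add_const 0.375).congr_deriv (by norm_num; ring)
  have key := integral_shear_invariant_mul_tangential_fderiv_eq_zero (C := 1)
    (h := fun s => if s ≤ 0 then -1 else 0) (hφ.of_le (by norm_cast)) hcpt hg
    (by fun_prop) (Measurable.ite measurableSet_Iic measurable_const measurable_const)
    (fun s => by split_ifs <;> simp)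
  rw [setIntegral_eq_integral_of_forall_compl_eq_zero]
  · refine Eq.trans ?_ key
    congr 1 with p
    have hsplit : ((-0.8 * p.2 + 0.4, 1) : ℝ × ℝ)
        = (-0.8 * p.2 + 0.4) • ((1, 0) : ℝ × ℝ) + ((0, 1) : ℝ × ℝ) := by simp
    rw [hsplit, map_add, map_smul, smul_eq_mul]
    simp only [sub_nonpos]
    split_ifs <;> ring
  · intro p hp
    have h0 : fderiv ℝ φ p = 0 :=
      image_eq_zero_of_notMem_tsupport fun hmem => hp (hsupp (tsupport_fderiv_subset ℝ hmem))
    simp [h0]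
end

section
/- The piecewise-defined function u₁ of the vector advection test case is continuous on the closed square [0,1]². -/
/-- `ỹ(x,y) = (1.4 - √(1.96 + 1.6(0.375 - x - y)))/0.8`. -/
noncomputable def ytil (x y : ℝ) : ℝ :=
  (1.4 - Real.sqrt (1.96 + 1.6 * (0.375 - x - y))) / 0.8

/-- `x̃(x,y) = -0.4 ỹ² + 0.4 ỹ + 0.375`. -/
noncomputable def xtil (x y : ℝ) : ℝ :=
  -0.4 * (ytil x y) ^ 2 + 0.4 * ytil x y + 0.375

/-- The shock curve `c(y) = -0.4 y² + 0.4 y + 0.375`. -/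
def shockCurve (y : ℝ) : ℝ := -0.4 * y ^ 2 + 0.4 * y + 0.375

/-- The exact solution `u₁` of the vector advection test case, defined piecewise:
`u₁ = 1.3 - y` if `y > 1 - x` and `x ≤ c(y)`; `u₁ = 0.3 + x` if `y ≤ 1 - x` and
`x ≤ c(y)`; `u₁ = 0.3 + x̃` if `y ≤ 1 - x` and `x > c(y)`; `u₁ = 1.3 - ỹ` if `x > c(y)`
and `1 - x < y < 1.375 - x`; `u₁ = 0.3` if `y ≥ 1.375 - x`. -/
noncomputable def uOne (x y : ℝ) : ℝ :=
  if 1.375 - x ≤ y then 0.3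
  else if x ≤ shockCurve y then (if 1 - x < y then 1.3 - y else 0.3 + x)
  else (if y ≤ 1 - x then 0.3 + xtil x y else 1.3 - ytil x y)

/-- `ỹ` is at least `1` exactly beyond the line `x + y = 1.375`. -/
lemma one_le_ytil_iff (x y : ℝ) : 1 ≤ ytil x y ↔ 1.375 - x ≤ y := by
  have h : 1 ≤ ytil x y ↔ √(1.96 + 1.6 * (0.375 - x - y)) ≤ 0.6 := by
    unfold ytil
    rw [le_div_iff₀ (by norm_num)]
    constructor <;> intro h <;> linarith
  rw [h, Real.sqrt_le_left (by norm_num)]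
  constructor <;> intro h <;> linarith

/-- For `y ≤ 1`, lying to the left of the shock curve means `ỹ ≤ y`. -/
lemma ytil_le_iff {x y : ℝ} (hy : y ≤ 1) : ytil x y ≤ y ↔ x ≤ shockCurve y := by
  have h : ytil x y ≤ y ↔ 1.4 - 0.8 * y ≤ √(1.96 + 1.6 * (0.375 - x - y)) := by
    unfold ytil
    rw [div_le_iff₀ (by norm_num)]
    constructor <;> intro h <;> linarith
  rw [h, Real.le_sqrt' (by linarith), shockCurve]
  constructor <;> intro h <;> linarith

/-- The point `(x̃, ỹ)` lies on the same antidiagonal as `(x, y)`. -/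
lemma xtil_add_ytil {x y : ℝ} (h : x + y ≤ 1.6) : xtil x y + ytil x y = x + y := by
  have hs := Real.sq_sqrt (show 0 ≤ 1.96 + 1.6 * (0.375 - x - y) by linarith)
  unfold xtil ytil
  linear_combination (-0.625) * hs

/-- A closed form of `u₁` by lattice operations, valid for `y ≤ 1`. -/
lemma uOne_eq_min_sub_max {x y : ℝ} (hy : y ≤ 1) :
    uOne x y = 0.3 + min (x + y) 1 - max y (min (ytil x y) 1) := by
  unfold uOne
  split_ifs with h₁ h₂ h₃ h₃
  · rw [min_eq_right ((one_le_ytil_iff x y).2 h₁), max_eq_right hy,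
      min_eq_right (by linarith)]
    norm_num
  · rw [max_eq_left ((min_le_left _ _).trans ((ytil_le_iff hy).2 h₂)),
      min_eq_right (by linarith)]
    norm_num
  · rw [max_eq_left ((min_le_left _ _).trans ((ytil_le_iff hy).2 h₂)),
      min_eq_left (by linarith)]
    ring
  all_goals
    have hY : ytil x y ≤ 1 := (not_le.1 (mt (one_le_ytil_iff x y).1 h₁)).le
    have hyY : y ≤ ytil x y := (not_le.1 (mt (ytil_le_iff hy).1 h₂)).le
    rw [min_eq_left hY, max_eq_right hyY]
  · have hXY : xtil x y + ytil x y = x + y := xtil_add_ytil (by linarith)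
    rw [min_eq_left (by linarith)]
    linarith
  · rw [min_eq_right (by linarith)]
    norm_num

lemma continuous_ytil : Continuous fun p : ℝ × ℝ => ytil p.1 p.2 := by
  unfold ytil
  fun_prop

/-- The piecewise-defined exact solution `u₁` of the vector advection test case is
continuous on the closed square `[0,1]²`. -/
theorem uOne_continuousOn :
    ContinuousOn (fun p : ℝ × ℝ => uOne p.1 p.2)
      (Set.Icc (0:ℝ) 1 ×ˢ Set.Icc (0:ℝ) 1) := by
  have h : Continuous fun p : ℝ × ℝ =>
      0.3 + min (p.1 + p.2) 1 - max p.2 (min (ytil p.1 p.2) 1) := by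
    have := continuous_ytil
    fun_prop
  exact h.continuousOn.congr fun p hp => uOne_eq_min_sub_max hp.2.2
end

section
/- Let ψ : ℝ² → ℝ be continuously differentiable on an open set containing K = {(x,y) ∈ [0,1]² : x + y ≤ 1}, and suppose (0.8y − 0.4)·∂ψ/∂x(x,y) − ∂ψ/∂y(x,y) = 0 for all (x,y) ∈ K (i.e., ψ solves the adjoint transport equation ∇ψ·β = 0 with β(x,y) = (0.8y − 0.4, −1)), ψ(x,0) = 0 for all x ∈ [0,1], and ψ(0,y) = 0 for all y ∈ [0, 1/2]. Then ψ(x,y) = 0 for every (x,y) ∈ K. -/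
/-- A differentiable solution of the transport equation with velocity `(0.8 y - 0.4, -1)` is constant along
a characteristic `x = c + 0.4 (s - s ^ 2)`, `y = s`, as long as the latter stays in a set where the
equation holds. -/
theorem transport_eq_along_characteristic {ψ : ℝ × ℝ → ℝ} {K : Set (ℝ × ℝ)}
    (hψ : ∀ p ∈ K, DifferentiableAt ℝ ψ p)
    (hpde : ∀ p ∈ K, (0.8 * p.2 - 0.4) * fderiv ℝ ψ p (1, 0) - fderiv ℝ ψ p (0, 1) = 0)
    {c a b : ℝ} (hab : a ≤ b)
    (hK : ∀ s ∈ Set.Icc a b, (c + 0.4 * (s - s ^ 2), s) ∈ K) :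
    ψ (c + 0.4 * (b - b ^ 2), b) = ψ (c + 0.4 * (a - a ^ 2), a) := by
  have hderiv : ∀ s ∈ Set.Icc a b,
      HasDerivAt (fun s : ℝ => ψ (c + 0.4 * (s - s ^ 2), s)) 0 s := by
    intro s hs
    have hcurve : HasDerivAt (fun s : ℝ => (c + 0.4 * (s - s ^ 2), s))
        ((0.4 * (1 - 2 * s), 1) : ℝ × ℝ) s := by
      refine HasDerivAt.prodMk ?_ (hasDerivAt_id s)
      simpa using (((hasDerivAt_id s).sub ((hasDerivAt_id s).pow 2)).const_mul 0.4).const_add c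
    have hcomp := HasFDerivAt.comp_hasDerivAt (f := fun s : ℝ => (c + 0.4 * (s - s ^ 2), s)) s
      (hψ _ (hK s hs)).hasFDerivAt hcurve
    have hzero : fderiv ℝ ψ (c + 0.4 * (s - s ^ 2), s) (0.4 * (1 - 2 * s), 1) = 0 := by
      have hsplit : ((0.4 * (1 - 2 * s), 1) : ℝ × ℝ) =
          (0.4 * (1 - 2 * s)) • ((1, 0) : ℝ × ℝ) + (0, 1) := by
        simp
      have h := hpde _ (hK s hs)
      rw [hsplit, map_add, map_smul, smul_eq_mul]
      dsimp only at h
      linear_combination -h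
    rw [hzero] at hcomp
    exact hcomp
  exact constant_of_has_deriv_right_zero
    (fun s hs => (hderiv s hs).continuousAt.continuousWithinAt)
    (fun s hs => (hderiv s ⟨hs.1, hs.2.le⟩).hasDerivWithinAt) b ⟨hab, le_rfl⟩

/-- The characteristic through a point `(c + 0.4 (y - y ^ 2), y)` with nonnegative abscissa and
`y ∈ [0, 1]`, followed downwards, stays in the right half-plane until it hits either the bottom
edge or the lower half of the left edge. -/
theorem exists_characteristic_exit {c y : ℝ} (hy : 0 ≤ y) (hx : 0 ≤ c + 0.4 * (y - y ^ 2))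
    (hy1 : y ≤ 1) :
    ∃ a ∈ Set.Icc 0 y, (a = 0 ∨ (a ≤ 1 / 2 ∧ c + 0.4 * (a - a ^ 2) = 0)) ∧
      ∀ s ∈ Set.Icc a y, 0 ≤ c + 0.4 * (s - s ^ 2) := by
  rcases le_total 0 c with hc | hc
  · refine ⟨0, ⟨le_rfl, hy⟩, Or.inl rfl, fun s hs => ?_⟩
    nlinarith [mul_nonneg hs.1 (sub_nonneg.2 (hs.2.trans hy1))]
  · have hm : 0 ≤ min y (1 / 2) := le_min hy (by norm_num)
    have hxm : 0 ≤ c + 0.4 * (min y (1 / 2) - min y (1 / 2) ^ 2) := by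
      rcases min_choice y (1 / 2) with h | h <;> rw [h]
      · exact hx
      · nlinarith [sq_nonneg (y - 1 / 2)]
    obtain ⟨a, ha, hroot⟩ := intermediate_value_Icc hm
      (f := fun s : ℝ => c + 0.4 * (s - s ^ 2)) (by fun_prop)
      (show (0 : ℝ) ∈ Set.Icc _ _ from ⟨by simpa using hc, hxm⟩)
    have hay : a ≤ y := ha.2.trans (min_le_left _ _)
    have hahalf : a ≤ 1 / 2 := ha.2.trans (min_le_right _ _)
    dsimp only at hroot
    refine ⟨a, ⟨ha.1, hay⟩, Or.inr ⟨hahalf, hroot⟩, fun s hs => ?_⟩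
    rcases le_total s (1 - a) with h | h
    · nlinarith [mul_nonneg (sub_nonneg.2 hs.1) (sub_nonneg.2 h)]
    · have hsy : 0 ≤ y + s - 1 := by linarith [hs.2]
      nlinarith [mul_nonneg (sub_nonneg.2 hs.2) hsy]

/-- If `ψ` is continuously differentiable on an open set containing
`K = {(x,y) ∈ [0,1]² : x + y ≤ 1}`, solves the adjoint transport equation `∇ψ·β = 0`
with `β(x,y) = (0.8 y - 0.4, -1)` on `K`, vanishes on the bottom edge `y = 0` for
`x ∈ [0,1]`, and vanishes on the left edge `x = 0` for `y ∈ [0, 1/2]`, then `ψ`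
vanishes on all of `K`. -/
theorem adjoint_psi0_vanishes_below_line
    (ψ : ℝ × ℝ → ℝ) (U : Set (ℝ × ℝ)) (hU : IsOpen U)
    (hsub : {p : ℝ × ℝ | p ∈ Set.Icc (0:ℝ) 1 ×ˢ Set.Icc (0:ℝ) 1 ∧ p.1 + p.2 ≤ 1} ⊆ U)
    (hdiff : ContDiffOn ℝ 1 ψ U)
    (hpde : ∀ p ∈ {p : ℝ × ℝ | p ∈ Set.Icc (0:ℝ) 1 ×ˢ Set.Icc (0:ℝ) 1 ∧ p.1 + p.2 ≤ 1},
      (0.8 * p.2 - 0.4) * fderiv ℝ ψ p (1, 0) - fderiv ℝ ψ p (0, 1) = 0)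
    (hbottom : ∀ x ∈ Set.Icc (0:ℝ) 1, ψ (x, 0) = 0)
    (hleft : ∀ y ∈ Set.Icc (0:ℝ) (1/2), ψ (0, y) = 0) :
    ∀ p ∈ {p : ℝ × ℝ | p ∈ Set.Icc (0:ℝ) 1 ×ˢ Set.Icc (0:ℝ) 1 ∧ p.1 + p.2 ≤ 1},
      ψ p = 0 := by
  rintro ⟨x, y⟩ ⟨⟨⟨hx0, hx1⟩, hy0, hy1⟩, hxy⟩
  dsimp only at hx0 hx1 hy0 hy1 hxy
  obtain ⟨c, rfl⟩ : ∃ c, x = c + 0.4 * (y - y ^ 2) := ⟨x - 0.4 * (y - y ^ 2), by ring⟩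
  obtain ⟨a, ha, hexit, hnonneg⟩ := exists_characteristic_exit hy0 hx0 hy1
  have hK : ∀ s ∈ Set.Icc a y, (c + 0.4 * (s - s ^ 2), s) ∈
      {p : ℝ × ℝ | p ∈ Set.Icc (0:ℝ) 1 ×ˢ Set.Icc (0:ℝ) 1 ∧ p.1 + p.2 ≤ 1} := by
    intro s hs
    have hs0 : 0 ≤ s := ha.1.trans hs.1
    have hs1 : s ≤ 1 := hs.2.trans hy1
    have hsum : c + 0.4 * (s - s ^ 2) + s ≤ 1 := by
      have hfac : 0 ≤ 1.4 - 0.4 * (y + s) := by linarith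
      nlinarith [mul_nonneg (sub_nonneg.2 hs.2) hfac]
    exact ⟨⟨⟨hnonneg s hs, by dsimp only; linarith⟩, hs0, hs1⟩, hsum⟩
  have hψ : ∀ p ∈ {p : ℝ × ℝ | p ∈ Set.Icc (0:ℝ) 1 ×ˢ Set.Icc (0:ℝ) 1 ∧ p.1 + p.2 ≤ 1},
      DifferentiableAt ℝ ψ p := fun p hp =>
    (hdiff.contDiffAt (hU.mem_nhds (hsub hp))).differentiableAt one_ne_zero
  rw [transport_eq_along_characteristic hψ hpde ha.2 hK]
  rcases hexit with rfl | ⟨hahalf, hroot⟩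
  · exact hbottom _ (hK 0 ⟨le_rfl, ha.2⟩).1.1
  · rw [hroot]
    exact hleft a ⟨ha.1, hahalf⟩
end
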